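/- arXiv:2209.02796 — 2 statements merged into one kernel-verified Lean document; each statement's English description precedes it below -/
import Mathlib

section
/- Let n ≥ 1 and p ∈ (1,∞). There exist constants 0 < c ≤ C, depending only on p, such that for every κ ≥ 0 and all n×n real matrices A and B one has c·(κ + |A| + |B|)^{p−2}·|A − B|² ≤ (S(A) − S(B)) : (A − B) ≤ C·(κ + |A| + |B|)^{p−2}·|A − B|² (where the middle term is interpreted as 0 when A = B). -/
/-!
Write `a = |A|`, `b = |B|`, `s = A : B`, `g t = (κ + t) ^ (p - 2)` and `M = (κ + a + b) ^ (p - 2)`.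
Then `(S A - S B) : (A - B) = g a * a² + g b * b² - (g a + g b) * s` and `|A - B|² = a² + b² - 2 s`,
so for fixed `a, b` both inequalities are affine in `s`, and `|s| ≤ a b` by Cauchy–Schwarz. It is
therefore enough to treat `s = a b` and `s = -(a b)` (`affine_nonneg`), where they become
comparisons of `h a ∓ h b` with `M (a ∓ b)` for the scalar function `h t = g t * t`.

For `b ≤ a` one has `κ + a ≤ κ + a + b ≤ 2 (κ + a)`, so `g a` and `M` are comparable. One of the two
bounds on `h a - h b` comes from `h a - h b = g a * (a - b) + (g a - g b) * b` and the monotonicity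
of `g`; the other from the tangent-line inequality for `x ↦ x ^ (p - 1)` (Bernoulli). The two cases
`2 ≤ p` and `p < 2` exchange the roles of the upper and the lower bound.
-/

open Real MeasureTheory

/-- Frobenius norm of an n × n real matrix. -/
noncomputable def frobNorm {n : ℕ} (A : Matrix (Fin n) (Fin n) ℝ) : ℝ :=
  Real.sqrt (∑ i, ∑ j, (A i j) ^ 2)

/-- Frobenius inner product A : B of two n × n real matrices. -/
noncomputable def frobInner {n : ℕ} (A B : Matrix (Fin n) (Fin n) ℝ) : ℝ :=
  ∑ i, ∑ j, A i j * B i j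

/-- S(ξ) = (κ + |ξ|)^(p-2) ξ. -/
noncomputable def Smap {n : ℕ} (p κ : ℝ) (A : Matrix (Fin n) (Fin n) ℝ) :
    Matrix (Fin n) (Fin n) ℝ :=
  ((κ + frobNorm A) ^ (p - 2)) • A

/-- V(ξ) = (κ + |ξ|)^((p-2)/2) ξ. -/
noncomputable def Vmap {n : ℕ} (p κ : ℝ) (A : Matrix (Fin n) (Fin n) ℝ) :
    Matrix (Fin n) (Fin n) ℝ :=
  ((κ + frobNorm A) ^ ((p - 2) / 2)) • A

/-- The shifted potential φ_κ(t) = ∫₀^t (κ+s)^(p-2) s ds. -/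
noncomputable def phiShift (p κ t : ℝ) : ℝ :=
  ∫ s in (0:ℝ)..t, (κ + s) ^ (p - 2) * s

theorem affine_nonneg {α β r s : ℝ} (hs : |s| ≤ r) (h₁ : 0 ≤ α - β * r) (h₂ : 0 ≤ α + β * r) :
    0 ≤ α - β * s := by
  obtain ⟨hl, hu⟩ := abs_le.mp hs
  rcases le_total 0 β with hβ | hβ <;> nlinarith

theorem rpow_sub_one_eq {p x : ℝ} (hp : 1 < p) (hx : 0 ≤ x) :
    x ^ (p - 2) * x = x ^ (p - 1) := by
  rcases hx.eq_or_lt with rfl | hx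
  · rw [mul_zero, Real.zero_rpow (by linarith)]
  · rw [← Real.rpow_add_one hx.ne']; congr 1; ring

/-- Scalar bounds on `h a ∓ h b` for `2 ≤ p`, where `h t = (κ + t) ^ (p - 2) * t`. -/
theorem scalar_of_two_le {p κ a b : ℝ} (hp : 2 ≤ p) (hκ : 0 ≤ κ) (hb : 0 ≤ b) (hab : b ≤ a)
    (ha : 0 < a) :
    2 ^ (1 - p) * ((κ + a + b) ^ (p - 2) * (a - b))
        ≤ (κ + a) ^ (p - 2) * a - (κ + b) ^ (p - 2) * b ∧
      (κ + a) ^ (p - 2) * a - (κ + b) ^ (p - 2) * b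
        ≤ (p - 1) * ((κ + a + b) ^ (p - 2) * (a - b)) ∧
      2 ^ (1 - p) * ((κ + a + b) ^ (p - 2) * (a + b))
        ≤ (κ + a) ^ (p - 2) * a + (κ + b) ^ (p - 2) * b ∧
      (κ + a) ^ (p - 2) * a + (κ + b) ^ (p - 2) * b
        ≤ (p - 1) * ((κ + a + b) ^ (p - 2) * (a + b)) := by
  have hx : 0 < κ + a := by linarith
  have hy : 0 ≤ κ + b := by linarith
  have hgb : (κ + b) ^ (p - 2) ≤ (κ + a) ^ (p - 2) :=
    Real.rpow_le_rpow hy (by linarith) (by linarith)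
  have hga : (κ + a) ^ (p - 2) ≤ (κ + a + b) ^ (p - 2) :=
    Real.rpow_le_rpow hx.le (by linarith) (by linarith)
  have hgb0 : 0 ≤ (κ + b) ^ (p - 2) := Real.rpow_nonneg hy _
  have hga0 : 0 < (κ + a) ^ (p - 2) := Real.rpow_pos_of_pos hx _
  have hM : 2 * (2 ^ (1 - p) * (κ + a + b) ^ (p - 2)) ≤ (κ + a) ^ (p - 2) := by
    have h1 : (κ + a + b) ^ (p - 2) ≤ 2 ^ (p - 2) * (κ + a) ^ (p - 2) := by
      rw [← Real.mul_rpow (by norm_num) hx.le]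
      exact Real.rpow_le_rpow (by linarith) (by linarith) (by linarith)
    have h2 : (2 : ℝ) * 2 ^ (1 - p) * 2 ^ (p - 2) = 1 := by
      rw [mul_assoc, ← Real.rpow_add (by norm_num), show 1 - p + (p - 2) = (-1 : ℝ) by ring,
        Real.rpow_neg_one]
      norm_num
    calc 2 * (2 ^ (1 - p) * (κ + a + b) ^ (p - 2))
        ≤ 2 * (2 ^ (1 - p) * (2 ^ (p - 2) * (κ + a) ^ (p - 2))) := by gcongr
      _ = (2 * 2 ^ (1 - p) * 2 ^ (p - 2)) * (κ + a) ^ (p - 2) := by ring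
      _ = _ := by rw [h2, one_mul]
  -- the tangent-line inequality for the convex function `x ^ (p - 1)` at `κ + a`
  have hT : (κ + a) ^ (p - 1) - (κ + b) ^ (p - 1) ≤ (p - 1) * ((κ + a) ^ (p - 2) * (a - b)) := by
    have hB := one_add_mul_self_le_rpow_one_add (s := (κ + b) / (κ + a) - 1)
      (by linarith [div_nonneg hy hx.le]) (p := p - 1) (by linarith)
    rw [add_sub_cancel, Real.div_rpow hy hx.le, le_div_iff₀ (Real.rpow_pos_of_pos hx _)] at hB
    have e := rpow_sub_one_eq (p := p) (by linarith) hx.le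
    have e2 : (1 + (p - 1) * ((κ + b) / (κ + a) - 1)) * (κ + a) ^ (p - 1)
        = (κ + a) ^ (p - 1) - (p - 1) * ((κ + a) ^ (p - 2) * (a - b)) := by
      rw [← e]; field_simp; ring
    linarith
  have hM0 : 0 ≤ 2 ^ (1 - p) * (κ + a + b) ^ (p - 2) := by positivity
  have ea := rpow_sub_one_eq (p := p) (by linarith) hx.le
  have eb := rpow_sub_one_eq (p := p) (by linarith) hy
  generalize (κ + a) ^ (p - 2) = ga at *
  generalize (κ + b) ^ (p - 2) = gb at *
  generalize (κ + a + b) ^ (p - 2) = M at *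
  generalize (2 : ℝ) ^ (1 - p) = c at *
  refine ⟨?_, ?_, ?_, ?_⟩
  · nlinarith [mul_nonneg (sub_nonneg.2 hgb) hb,
      mul_nonneg (sub_nonneg.2 hM) (sub_nonneg.2 hab), mul_nonneg hM0 (sub_nonneg.2 hab)]
  · have h1 : 0 ≤ (p - 1) * ((M - ga) * (a - b)) :=
      mul_nonneg (by linarith) (mul_nonneg (by linarith) (by linarith))
    nlinarith [mul_nonneg hκ (sub_nonneg.2 hgb)]
  · nlinarith [mul_nonneg (sub_nonneg.2 hM) ha.le, mul_nonneg hM0 (sub_nonneg.2 hab),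
      mul_nonneg hgb0 hb]
  · have h1 : 0 ≤ (p - 2) * (M * (a + b)) :=
      mul_nonneg (by linarith) (mul_nonneg (by linarith) (by linarith))
    nlinarith [mul_nonneg (sub_nonneg.2 hga) ha.le, mul_nonneg (sub_nonneg.2 (hgb.trans hga)) hb]

/-- Scalar bounds on `h a ∓ h b` for `1 < p < 2`, where `h t = (κ + t) ^ (p - 2) * t`. -/
theorem scalar_of_lt_two {p κ a b : ℝ} (hp : 1 < p) (hp2 : p < 2) (hκ : 0 ≤ κ) (hb : 0 ≤ b)
    (hab : b ≤ a) (ha : 0 < a) :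
    (p - 1) * ((κ + a + b) ^ (p - 2) * (a - b))
        ≤ (κ + a) ^ (p - 2) * a - (κ + b) ^ (p - 2) * b ∧
      (κ + a) ^ (p - 2) * a - (κ + b) ^ (p - 2) * b
        ≤ 4 * ((κ + a + b) ^ (p - 2) * (a - b)) ∧
      (p - 1) * ((κ + a + b) ^ (p - 2) * (a + b))
        ≤ (κ + a) ^ (p - 2) * a + (κ + b) ^ (p - 2) * b ∧
      (κ + a) ^ (p - 2) * a + (κ + b) ^ (p - 2) * b
        ≤ 4 * ((κ + a + b) ^ (p - 2) * (a + b)) := by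
  have hx : 0 < κ + a := by linarith
  have hy : 0 ≤ κ + b := by linarith
  -- `κ + b` may vanish, where `0 ^ (p - 2) = 0` breaks the monotonicity of the power;
  -- then `κ = b = 0`, and the inequality survives multiplication by `κ` or `b`
  have hmono : 0 < κ + b → (κ + a) ^ (p - 2) ≤ (κ + b) ^ (p - 2) := fun h =>
    Real.rpow_le_rpow_of_nonpos h (by linarith) (by linarith)
  have hgb : (κ + a) ^ (p - 2) * b ≤ (κ + b) ^ (p - 2) * b := by
    rcases hb.eq_or_lt with h | h
    · simp [← h]
    · exact mul_le_mul_of_nonneg_right (hmono (by linarith)) hb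
  have hgκ : (κ + a) ^ (p - 2) * κ ≤ (κ + b) ^ (p - 2) * κ := by
    rcases hκ.eq_or_lt with h | h
    · simp [← h]
    · exact mul_le_mul_of_nonneg_right (hmono (by linarith)) hκ
  have hga : (κ + a + b) ^ (p - 2) ≤ (κ + a) ^ (p - 2) :=
    Real.rpow_le_rpow_of_nonpos hx (by linarith) (by linarith)
  have hM0 : 0 < (κ + a + b) ^ (p - 2) := Real.rpow_pos_of_pos (by linarith) _
  have hM : (κ + a) ^ (p - 2) ≤ 2 * (κ + a + b) ^ (p - 2) := by
    have h1 : 2 ^ (p - 2) * (κ + a) ^ (p - 2) ≤ (κ + a + b) ^ (p - 2) := by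
      rw [← Real.mul_rpow (by norm_num) hx.le]
      exact Real.rpow_le_rpow_of_nonpos (by linarith) (by linarith) (by linarith)
    have h2 : (1 / 2 : ℝ) ≤ 2 ^ (p - 2) := by
      rw [one_div, ← Real.rpow_neg_one]
      exact Real.rpow_le_rpow_of_exponent_le (by norm_num) (by linarith)
    nlinarith [mul_le_mul_of_nonneg_right h2 (hM0.le.trans hga)]
  -- the tangent-line inequality for the concave function `x ^ (p - 1)` at `κ + a`
  have hT : (p - 1) * ((κ + a) ^ (p - 2) * (a - b)) ≤ (κ + a) ^ (p - 1) - (κ + b) ^ (p - 1) := by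
    have hB := rpow_one_add_le_one_add_mul_self (s := (κ + b) / (κ + a) - 1)
      (by linarith [div_nonneg hy hx.le]) (p := p - 1) (by linarith) (by linarith)
    rw [add_sub_cancel, Real.div_rpow hy hx.le, div_le_iff₀ (Real.rpow_pos_of_pos hx _)] at hB
    have e := rpow_sub_one_eq hp hx.le
    have e2 : (1 + (p - 1) * ((κ + b) / (κ + a) - 1)) * (κ + a) ^ (p - 1)
        = (κ + a) ^ (p - 1) - (p - 1) * ((κ + a) ^ (p - 2) * (a - b)) := by
      rw [← e]; field_simp; ring
    linarith
  have ea := rpow_sub_one_eq hp hx.le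
  have eb := rpow_sub_one_eq hp hy
  generalize (κ + a) ^ (p - 2) = ga at *
  generalize (κ + b) ^ (p - 2) = gb at *
  generalize (κ + a + b) ^ (p - 2) = M at *
  have hL : (p - 1) * (M * (a - b)) ≤ ga * a - gb * b := by
    have h1 : 0 ≤ (p - 1) * ((ga - M) * (a - b)) :=
      mul_nonneg (by linarith) (mul_nonneg (by linarith) (by linarith))
    nlinarith
  have hMab : 0 ≤ M * (a - b) := mul_nonneg hM0.le (by linarith)
  refine ⟨hL, ?_, ?_, ?_⟩
  · nlinarith [mul_nonneg (sub_nonneg.2 hM) (sub_nonneg.2 hab)]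
  · have h1 : 0 ≤ (2 - p) * (M * (a + b)) :=
      mul_nonneg (by linarith) (mul_nonneg hM0.le (by linarith))
    nlinarith [mul_nonneg (sub_nonneg.2 hga) ha.le, mul_nonneg (sub_nonneg.2 hga) hb]
  · have h1 : 0 ≤ (p - 1) * (M * (a - b)) := mul_nonneg (by linarith) hMab
    nlinarith [mul_nonneg (sub_nonneg.2 hM) ha.le, mul_nonneg hM0.le hb]

theorem scalar_bounds {p : ℝ} (hp : 1 < p) :
    ∃ c C : ℝ, 0 < c ∧ c ≤ C ∧ ∀ κ a b : ℝ, 0 ≤ κ → 0 ≤ b → b ≤ a → 0 < a →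
      c * ((κ + a + b) ^ (p - 2) * (a - b))
          ≤ (κ + a) ^ (p - 2) * a - (κ + b) ^ (p - 2) * b ∧
        (κ + a) ^ (p - 2) * a - (κ + b) ^ (p - 2) * b
          ≤ C * ((κ + a + b) ^ (p - 2) * (a - b)) ∧
        c * ((κ + a + b) ^ (p - 2) * (a + b))
          ≤ (κ + a) ^ (p - 2) * a + (κ + b) ^ (p - 2) * b ∧
        (κ + a) ^ (p - 2) * a + (κ + b) ^ (p - 2) * b
          ≤ C * ((κ + a + b) ^ (p - 2) * (a + b)) := by
  rcases le_or_gt 2 p with h | h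
  · refine ⟨2 ^ (1 - p), p - 1, by positivity, ?_, fun κ a b hκ hb hab ha =>
      scalar_of_two_le h hκ hb hab ha⟩
    have : (2 : ℝ) ^ (1 - p) ≤ 1 :=
      Real.rpow_le_one_of_one_le_of_nonpos (by norm_num) (by linarith)
    linarith
  · exact ⟨p - 1, 4, by linarith, by linarith, fun κ a b hκ hb hab ha =>
      scalar_of_lt_two hp h hκ hb hab ha⟩

/-- The inequality of the theorem in terms of `a = |A|`, `b = |B|` and `s = A : B`. -/
theorem quadratic_bounds {p : ℝ} (hp : 1 < p) :
    ∃ c C : ℝ, 0 < c ∧ c ≤ C ∧ ∀ κ a b s : ℝ, 0 ≤ κ → 0 ≤ a → 0 ≤ b → |s| ≤ a * b →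
      c * ((κ + a + b) ^ (p - 2) * (a ^ 2 + b ^ 2 - 2 * s))
          ≤ (κ + a) ^ (p - 2) * a ^ 2 + (κ + b) ^ (p - 2) * b ^ 2
            - ((κ + a) ^ (p - 2) + (κ + b) ^ (p - 2)) * s ∧
        (κ + a) ^ (p - 2) * a ^ 2 + (κ + b) ^ (p - 2) * b ^ 2
            - ((κ + a) ^ (p - 2) + (κ + b) ^ (p - 2)) * s
          ≤ C * ((κ + a + b) ^ (p - 2) * (a ^ 2 + b ^ 2 - 2 * s)) := by
  obtain ⟨c, C, hc, hcC, H⟩ := scalar_bounds hp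
  refine ⟨c, C, hc, hcC, fun κ a b s hκ ha hb hs => ?_⟩
  wlog hab : b ≤ a generalizing a b
  · have := this b a hb ha (by rwa [mul_comm]) (le_of_not_ge hab)
    rw [add_right_comm κ b a] at this
    convert this using 1 <;> congr! 1 <;> ring
  rcases ha.eq_or_lt with h0 | ha'
  · obtain rfl : b = 0 := by linarith
    subst h0
    have : s = 0 := by simpa using hs
    simp [this]
  obtain ⟨h1, h2, h3, h4⟩ := H κ a b hκ hb hab ha'
  generalize (κ + a) ^ (p - 2) = ga at *
  generalize (κ + b) ^ (p - 2) = gb at *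
  generalize (κ + a + b) ^ (p - 2) = M at *
  have hm : 0 ≤ a - b := sub_nonneg.2 hab
  have hq : 0 ≤ a + b := by linarith
  have k1 := mul_nonneg (sub_nonneg.2 h1) hm
  have k2 := mul_nonneg (sub_nonneg.2 h2) hm
  have k3 := mul_nonneg (sub_nonneg.2 h3) hq
  have k4 := mul_nonneg (sub_nonneg.2 h4) hq
  constructor
  · have := affine_nonneg (α := ga * a ^ 2 + gb * b ^ 2 - c * M * (a ^ 2 + b ^ 2))
      (β := ga + gb - 2 * (c * M)) hs (by linarith) (by linarith)
    linarith
  · have := affine_nonneg (α := C * M * (a ^ 2 + b ^ 2) - (ga * a ^ 2 + gb * b ^ 2))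
      (β := 2 * (C * M) - (ga + gb)) hs (by linarith) (by linarith)
    linarith

theorem frobNorm_sq {n : ℕ} (A : Matrix (Fin n) (Fin n) ℝ) :
    frobNorm A ^ 2 = ∑ i, ∑ j, A i j ^ 2 :=
  Real.sq_sqrt (by positivity)

theorem abs_frobInner_le {n : ℕ} (A B : Matrix (Fin n) (Fin n) ℝ) :
    |frobInner A B| ≤ frobNorm A * frobNorm B := by
  refine abs_le_of_sq_le_sq ?_ (mul_nonneg (Real.sqrt_nonneg _) (Real.sqrt_nonneg _))
  rw [mul_pow, frobNorm_sq, frobNorm_sq, frobInner]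
  have := Finset.sum_mul_sq_le_sq_mul_sq (Finset.univ : Finset (Fin n × Fin n))
    (fun x => A x.1 x.2) (fun x => B x.1 x.2)
  simpa only [Fintype.sum_prod_type] using this

theorem frobNorm_sub_sq {n : ℕ} (A B : Matrix (Fin n) (Fin n) ℝ) :
    frobNorm (A - B) ^ 2 = frobNorm A ^ 2 + frobNorm B ^ 2 - 2 * frobInner A B := by
  simp only [frobNorm_sq, frobInner, Finset.mul_sum, ← Finset.sum_add_distrib,
    ← Finset.sum_sub_distrib, Matrix.sub_apply]
  refine Finset.sum_congr rfl fun i _ => Finset.sum_congr rfl fun j _ => ?_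
  ring

theorem frobInner_smul_sub {n : ℕ} (x y : ℝ) (A B : Matrix (Fin n) (Fin n) ℝ) :
    frobInner (x • A - y • B) (A - B) =
      x * frobNorm A ^ 2 + y * frobNorm B ^ 2 - (x + y) * frobInner A B := by
  simp only [frobNorm_sq, frobInner, Finset.mul_sum, ← Finset.sum_add_distrib,
    ← Finset.sum_sub_distrib, Matrix.sub_apply, Matrix.smul_apply, smul_eq_mul]
  refine Finset.sum_congr rfl fun i _ => Finset.sum_congr rfl fun j _ => ?_
  ring

theorem stmt_1 (p : ℝ) (hp : 1 < p) :
    ∃ c C : ℝ, 0 < c ∧ c ≤ C ∧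
      ∀ (n : ℕ), 1 ≤ n → ∀ κ : ℝ, 0 ≤ κ →
        ∀ A B : Matrix (Fin n) (Fin n) ℝ,
          c * ((κ + frobNorm A + frobNorm B) ^ (p - 2) * frobNorm (A - B) ^ 2) ≤
              frobInner (Smap p κ A - Smap p κ B) (A - B) ∧
          frobInner (Smap p κ A - Smap p κ B) (A - B) ≤
              C * ((κ + frobNorm A + frobNorm B) ^ (p - 2) * frobNorm (A - B) ^ 2) := by
  obtain ⟨c, C, hc, hcC, H⟩ := quadratic_bounds hp
  refine ⟨c, C, hc, hcC, fun n _ κ hκ A B => ?_⟩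
  rw [Smap, Smap, frobInner_smul_sub, frobNorm_sub_sq]
  exact H κ _ _ _ hκ (Real.sqrt_nonneg _) (Real.sqrt_nonneg _) (abs_frobInner_le A B)
end

section
/- Let n ≥ 1 and p ∈ (1,∞). For every δ > 0 there exists a constant C_δ ≥ 1, depending only on p and δ, such that for all n×n real matrices A and B and all t ≥ 0 one has φ_{|A|}(t) ≤ C_δ·φ_{|B|}(t) + δ·|V₀(A) − V₀(B)|². -/
/-!
With `a = |A|`, `b = |B|` one has `|V₀(A)| = a ^ (p / 2)`, so the reverse triangle inequality bounds
`|V₀(A) - V₀(B)|` from below by `|a ^ (p / 2) - b ^ (p / 2)|` and the claim becomes one about the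
numbers `a`, `b`, `t ≥ 0`.

* If `a ≤ 4 b` and `b ≤ 4 a`, the integrands of `φ_a` and `φ_b` are comparable pointwise
  (`phiShift_le_of_comparable`), and the `δ`-term is not needed.
* Otherwise `|a ^ (p / 2) - b ^ (p / 2)|² ≥ m ^ p / 4` with `m = max a b` (`quarter_rpow_le`), and it
  suffices that `φ_a(t) ≤ C φ_b(t) + η m ^ p` (`phiShift_le_add_rpow`). For `ε` small depending on `η`,
  the term `η m ^ p` absorbs `φ_a(t)` when `t ≤ ε m`, while for `t ≥ ε m` both `φ_a(t)` and `φ_b(t)`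
  are comparable to `t ^ p`. This rests on elementary bounds of `φ_κ(t)` by `t ^ p` and by
  `(κ + t) ^ (p - 2) t ^ 2`, whose directions swap at `p = 2`.
-/

open Real MeasureTheory

/-- V₀(ξ) = |ξ|^((p-2)/2) ξ. -/
noncomputable def Vzero {n : ℕ} (p : ℝ) (A : Matrix (Fin n) (Fin n) ℝ) :
    Matrix (Fin n) (Fin n) ℝ :=
  ((frobNorm A) ^ ((p - 2) / 2)) • A

/-! ### Reduction to norms -/

section FrobeniusNorm

attribute [local instance] Matrix.frobeniusNormedAddCommGroup Matrix.frobeniusNormedSpace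

lemma frobNorm_eq_norm {n : ℕ} (A : Matrix (Fin n) (Fin n) ℝ) : frobNorm A = ‖A‖ := by
  rw [Matrix.frobenius_norm_def, frobNorm, Real.sqrt_eq_rpow]
  simp

lemma frobNorm_Vzero {n : ℕ} {p : ℝ} (hp : 1 < p) (A : Matrix (Fin n) (Fin n) ℝ) :
    frobNorm (Vzero p A) = frobNorm A ^ (p / 2) := by
  have h0 : 0 ≤ frobNorm A := Real.sqrt_nonneg _
  have h1 : frobNorm (Vzero p A) = frobNorm A ^ ((p - 2) / 2) * frobNorm A := by
    rw [frobNorm_eq_norm (Vzero p A), Vzero, norm_smul, ← frobNorm_eq_norm,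
      Real.norm_of_nonneg (Real.rpow_nonneg h0 _)]
  rw [h1, ← Real.rpow_add_one' h0 (by linarith)]
  congr 1
  ring

lemma sq_sub_le_frobNorm_sq {n : ℕ} {p : ℝ} (hp : 1 < p) (A B : Matrix (Fin n) (Fin n) ℝ) :
    (frobNorm A ^ (p / 2) - frobNorm B ^ (p / 2)) ^ 2 ≤
      frobNorm (Vzero p A - Vzero p B) ^ 2 := by
  rw [← frobNorm_Vzero hp, ← frobNorm_Vzero hp]
  simp only [frobNorm_eq_norm]
  exact sq_le_sq.2 ((abs_norm_sub_norm_le _ _).trans (le_abs_self _))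

end FrobeniusNorm

/-! ### Bounds for the shifted potential -/

/-- The integrand is dominated by the continuous function `(κ + s) ^ (p - 1)`; for `p < 2` and
`κ = 0` the factor `(κ + s) ^ (p - 2)` alone is singular at `s = 0`. -/
lemma intervalIntegrable_phiShift {p κ t : ℝ} (hp : 1 < p) (hκ : 0 ≤ κ) (ht : 0 ≤ t) :
    IntervalIntegrable (fun s : ℝ => (κ + s) ^ (p - 2) * s) volume 0 t := by
  have hc : Continuous fun s : ℝ => (κ + s) ^ (p - 1) :=
    (continuous_const.add continuous_id).rpow_const fun _ => Or.inr (by linarith)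
  refine (hc.intervalIntegrable 0 t).mono_fun (by fun_prop) ?_
  rw [Set.uIoc_of_le ht]
  refine (ae_restrict_mem measurableSet_Ioc).mono fun s hs => ?_
  have hs0 : 0 < s := hs.1
  have hκs : 0 < κ + s := by linarith
  have hr := Real.rpow_pos_of_pos hκs (p - 2)
  simp only
  rw [Real.norm_of_nonneg (by positivity), Real.norm_of_nonneg (by positivity),
    show p - 1 = (p - 2) + 1 by ring, Real.rpow_add_one hκs.ne']
  exact mul_le_mul_of_nonneg_left (by linarith) hr.le

/-- The endpoint `s = 0` is excluded from the hypothesis because of the conventions for `0 ^ q`. -/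
lemma intervalIntegral_mono_Ioc {f g : ℝ → ℝ} {t : ℝ} (ht : 0 ≤ t)
    (hf : IntervalIntegrable f volume 0 t) (hg : IntervalIntegrable g volume 0 t)
    (h : ∀ s, 0 < s → s ≤ t → f s ≤ g s) : ∫ s in (0 : ℝ)..t, f s ≤ ∫ s in (0 : ℝ)..t, g s :=
  intervalIntegral.integral_mono_on_of_le_Ioo ht hf hg fun s hs => h s hs.1 hs.2.le

lemma phiShift_nonneg {p κ t : ℝ} (hκ : 0 ≤ κ) (ht : 0 ≤ t) : 0 ≤ phiShift p κ t :=
  intervalIntegral.integral_nonneg ht fun _ hs =>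
    mul_nonneg (Real.rpow_nonneg (add_nonneg hκ hs.1) _) hs.1

lemma rpow_le_mul_rpow_of_comparable {q K x y : ℝ} (hK : 1 ≤ K) (hx : 0 < x) (hy : 0 < y)
    (hxy : x ≤ K * y) (hyx : y ≤ K * x) : x ^ q ≤ K ^ |q| * y ^ q := by
  have hK0 : 0 < K := by linarith
  rcases le_total 0 q with hq | hq
  · rw [abs_of_nonneg hq, ← Real.mul_rpow hK0.le hy.le]
    exact Real.rpow_le_rpow hx.le hxy hq
  · rw [abs_of_nonpos hq]
    have h := Real.rpow_le_rpow_of_nonpos hy hyx hq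
    rw [Real.mul_rpow hK0.le hx.le] at h
    calc x ^ q = K ^ (-q) * (K ^ q * x ^ q) := by
          rw [← mul_assoc, ← Real.rpow_add hK0]; simp
      _ ≤ K ^ (-q) * y ^ q := by gcongr

lemma phiShift_le_of_comparable {p K a b t : ℝ} (hp : 1 < p) (hK : 1 ≤ K) (ha : 0 ≤ a)
    (hb : 0 ≤ b) (ht : 0 ≤ t) (hab : a ≤ K * b) (hba : b ≤ K * a) :
    phiShift p a t ≤ K ^ |p - 2| * phiShift p b t := by
  rw [phiShift, phiShift, ← intervalIntegral.integral_const_mul]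
  refine intervalIntegral_mono_Ioc ht (intervalIntegrable_phiShift hp ha ht)
    ((intervalIntegrable_phiShift hp hb ht).const_mul _) fun s hs _ => ?_
  rw [← mul_assoc]
  refine mul_le_mul_of_nonneg_right ?_ hs.le
  exact rpow_le_mul_rpow_of_comparable hK (by linarith) (by linarith)
    (by nlinarith) (by nlinarith)

lemma phiShift_zero_left {p t : ℝ} (hp : 1 < p) (ht : 0 ≤ t) : phiShift p 0 t = t ^ p / p := by
  have h : phiShift p 0 t = ∫ s in (0 : ℝ)..t, s ^ (p - 1) := by
    refine intervalIntegral.integral_congr fun s hs => ?_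
    rw [Set.uIcc_of_le ht] at hs
    simp only [zero_add]
    rw [← Real.rpow_add_one' hs.1 (by linarith)]
    congr 1
    ring
  rw [h, integral_rpow (Or.inl (by linarith)), sub_add_cancel, Real.zero_rpow (by linarith),
    sub_zero]

lemma integral_const_mul_self (c t : ℝ) : ∫ s in (0 : ℝ)..t, c * s = c * (t ^ 2 / 2) := by
  rw [intervalIntegral.integral_const_mul, integral_id]
  ring

lemma phiShift_upper_two_le {p κ t : ℝ} (hp : 2 ≤ p) (hκ : 0 ≤ κ) (ht : 0 ≤ t) :
    phiShift p κ t ≤ (κ + t) ^ (p - 2) * (t ^ 2 / 2) := by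
  rw [← integral_const_mul_self]
  refine intervalIntegral_mono_Ioc ht (intervalIntegrable_phiShift (by linarith) hκ ht)
    (Continuous.intervalIntegrable (by fun_prop) _ _) fun s hs hst => ?_
  exact mul_le_mul_of_nonneg_right
    (Real.rpow_le_rpow (by linarith) (by linarith) (by linarith)) hs.le

lemma phiShift_lower_two_le {p κ t : ℝ} (hp : 2 ≤ p) (hκ : 0 ≤ κ) (ht : 0 ≤ t) :
    t ^ p / p ≤ phiShift p κ t := by
  rw [← phiShift_zero_left (by linarith) ht]
  refine intervalIntegral_mono_Ioc ht (intervalIntegrable_phiShift (by linarith) le_rfl ht)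
    (intervalIntegrable_phiShift (by linarith) hκ ht) fun s hs hst => ?_
  exact mul_le_mul_of_nonneg_right
    (Real.rpow_le_rpow (by linarith) (by linarith) (by linarith)) hs.le

lemma phiShift_upper_le_two {p κ t : ℝ} (hp1 : 1 < p) (hp : p ≤ 2) (hκ : 0 ≤ κ) (ht : 0 ≤ t) :
    phiShift p κ t ≤ t ^ p / p := by
  rw [← phiShift_zero_left hp1 ht]
  refine intervalIntegral_mono_Ioc ht (intervalIntegrable_phiShift hp1 hκ ht)
    (intervalIntegrable_phiShift hp1 le_rfl ht) fun s hs hst => ?_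
  exact mul_le_mul_of_nonneg_right
    (Real.rpow_le_rpow_of_nonpos (by linarith) (by linarith) (by linarith)) hs.le

lemma phiShift_lower_le_two {p κ t : ℝ} (hp1 : 1 < p) (hp : p ≤ 2) (hκ : 0 ≤ κ) (ht : 0 ≤ t) :
    (κ + t) ^ (p - 2) * (t ^ 2 / 2) ≤ phiShift p κ t := by
  rw [← integral_const_mul_self]
  refine intervalIntegral_mono_Ioc ht (Continuous.intervalIntegrable (by fun_prop) _ _)
    (intervalIntegrable_phiShift hp1 hκ ht) fun s hs hst => ?_
  exact mul_le_mul_of_nonneg_right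
    (Real.rpow_le_rpow_of_nonpos (by linarith) (by linarith) (by linarith)) hs.le

lemma rpow_sub_two_mul_sq {p x : ℝ} (hp : 1 < p) (hx : 0 ≤ x) : x ^ (p - 2) * x ^ 2 = x ^ p := by
  rw [← Real.rpow_natCast, ← Real.rpow_add' hx (by push_cast; linarith)]
  congr 1
  push_cast
  ring

/-! ### Non-comparable shifts -/

/-- Absorption: a large multiple of `φ_b(t)` controls `φ_a(t)` up to a small multiple of `m ^ p`,
where `m` bounds both shifts. -/
lemma phiShift_le_add_rpow {p η : ℝ} (hp : 1 < p) (hη : 0 < η) :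
    ∃ C : ℝ, 0 ≤ C ∧ ∀ a b m t : ℝ, 0 ≤ a → 0 ≤ b → a ≤ m → b ≤ m → 0 ≤ t →
      phiShift p a t ≤ C * phiShift p b t + η * m ^ p := by
  have hp0 : 0 < p := by linarith
  rcases le_total 2 p with h2 | h2
  · -- For `t ≤ ε m` with `ε ≤ 1` one has `φ_a(t) ≤ 2 ^ (p - 2) ε m ^ p`.
    have hc : 0 < (2 : ℝ) ^ (p - 2) := by positivity
    obtain ⟨ε, hε, hε1, hεη⟩ : ∃ ε : ℝ, 0 < ε ∧ ε ≤ 1 ∧ 2 ^ (p - 2) * ε ≤ η :=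
      ⟨min 1 (η / 2 ^ (p - 2)), by positivity, min_le_left _ _, by
        rw [mul_comm, ← le_div_iff₀ hc]; exact min_le_right _ _⟩
    refine ⟨(1 / ε + 1) ^ (p - 2) * p, by positivity, fun a b m t ha hb ham hbm ht => ?_⟩
    have hm : 0 ≤ m := ha.trans ham
    have hU := phiShift_upper_two_le h2 ha ht
    have hL := phiShift_lower_two_le h2 hb ht
    rcases le_total t (ε * m) with htm | htm
    · have h1 : (a + t) ^ (p - 2) ≤ 2 ^ (p - 2) * m ^ (p - 2) := by
        rw [← Real.mul_rpow (by norm_num) hm]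
        exact Real.rpow_le_rpow (by linarith) (by nlinarith) (by linarith)
      have h3 : t ^ 2 / 2 ≤ ε * m ^ 2 := by
        have : t ^ 2 ≤ (ε * m) ^ 2 := by gcongr
        nlinarith [mul_nonneg (mul_nonneg hε.le (sub_nonneg.2 hε1)) (sq_nonneg m), sq_nonneg t]
      have h4 : (a + t) ^ (p - 2) * (t ^ 2 / 2) ≤ η * m ^ p := by
        calc (a + t) ^ (p - 2) * (t ^ 2 / 2) ≤ (2 ^ (p - 2) * m ^ (p - 2)) * (ε * m ^ 2) := by
              gcongr
          _ = (2 ^ (p - 2) * ε) * (m ^ (p - 2) * m ^ 2) := by ring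
          _ ≤ η * m ^ p := by
              rw [rpow_sub_two_mul_sq hp hm]
              gcongr
      have h5 : 0 ≤ (1 / ε + 1) ^ (p - 2) * p * phiShift p b t :=
        mul_nonneg (by positivity) (phiShift_nonneg hb ht)
      linarith
    · have hat : a + t ≤ (1 / ε + 1) * t := by
        have : a ≤ 1 / ε * t := by
          rw [one_div, ← div_eq_inv_mul, le_div_iff₀ hε]
          nlinarith
        linarith
      have h1 : (a + t) ^ (p - 2) ≤ (1 / ε + 1) ^ (p - 2) * t ^ (p - 2) := by
        rw [← Real.mul_rpow (by positivity) ht]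
        exact Real.rpow_le_rpow (by linarith) hat (by linarith)
      have h4 : (a + t) ^ (p - 2) * (t ^ 2 / 2) ≤ (1 / ε + 1) ^ (p - 2) * p * (t ^ p / p) := by
        calc (a + t) ^ (p - 2) * (t ^ 2 / 2)
            ≤ ((1 / ε + 1) ^ (p - 2) * t ^ (p - 2)) * t ^ 2 := by
              gcongr
              nlinarith [sq_nonneg t]
          _ = (1 / ε + 1) ^ (p - 2) * (t ^ (p - 2) * t ^ 2) := by ring
          _ = (1 / ε + 1) ^ (p - 2) * p * (t ^ p / p) := by
              rw [rpow_sub_two_mul_sq hp ht]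
              field_simp
      have h5 : (1 / ε + 1) ^ (p - 2) * p * (t ^ p / p) ≤
          (1 / ε + 1) ^ (p - 2) * p * phiShift p b t := by gcongr
      have h6 : 0 ≤ η * m ^ p := by positivity
      linarith
  · -- For `t ≤ ε m` one has `φ_a(t) ≤ t ^ p ≤ ε ^ p m ^ p`, which suggests `ε = η ^ (1 / p)`.
    obtain ⟨ε, hε, hεη⟩ : ∃ ε : ℝ, 0 < ε ∧ ε ^ p = η :=
      ⟨η ^ (1 / p), by positivity, by
        rw [← Real.rpow_mul hη.le, one_div, inv_mul_cancel₀ hp0.ne', Real.rpow_one]⟩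
    refine ⟨2 * (1 / ε + 1) ^ (2 - p), by positivity, fun a b m t ha hb ham hbm ht => ?_⟩
    have hm : 0 ≤ m := ha.trans ham
    have hU : phiShift p a t ≤ t ^ p :=
      (phiShift_upper_le_two hp h2 ha ht).trans (div_le_self (by positivity) hp.le)
    have hL := phiShift_lower_le_two hp h2 hb ht
    have h6 : 0 ≤ η * m ^ p := by positivity
    rcases le_total t (ε * m) with htm | htm
    · have h4 : t ^ p ≤ η * m ^ p := by
        rw [← hεη, ← Real.mul_rpow hε.le hm]
        exact Real.rpow_le_rpow ht htm hp0.le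
      have h5 : 0 ≤ 2 * (1 / ε + 1) ^ (2 - p) * phiShift p b t :=
        mul_nonneg (by positivity) (phiShift_nonneg hb ht)
      linarith
    · rcases ht.eq_or_lt with rfl | ht0
      · have h7 : phiShift p a 0 = 0 := intervalIntegral.integral_same
        have h8 : phiShift p b 0 = 0 := intervalIntegral.integral_same
        rw [h7, h8]
        linarith
      have hbt : b + t ≤ (1 / ε + 1) * t := by
        have : b ≤ 1 / ε * t := by
          rw [one_div, ← div_eq_inv_mul, le_div_iff₀ hε]
          nlinarith
        linarith
      have hM : 0 < 1 / ε + 1 := by positivity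
      have h1 : (1 / ε + 1) ^ (p - 2) * t ^ (p - 2) ≤ (b + t) ^ (p - 2) := by
        rw [← Real.mul_rpow hM.le ht]
        exact Real.rpow_le_rpow_of_nonpos (by linarith) hbt (by linarith)
      have h9 : (1 / ε + 1) ^ (2 - p) * (1 / ε + 1) ^ (p - 2) = 1 := by
        rw [← Real.rpow_add hM]
        simp
      have h4 : t ^ p ≤ 2 * (1 / ε + 1) ^ (2 - p) * phiShift p b t := by
        calc t ^ p = t ^ (p - 2) * t ^ 2 := (rpow_sub_two_mul_sq hp ht).symm
          _ = ((1 / ε + 1) ^ (2 - p) * (1 / ε + 1) ^ (p - 2)) * (t ^ (p - 2) * t ^ 2) := by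
              rw [h9, one_mul]
          _ = 2 * (1 / ε + 1) ^ (2 - p) *
                (((1 / ε + 1) ^ (p - 2) * t ^ (p - 2)) * (t ^ 2 / 2)) := by ring
          _ ≤ 2 * (1 / ε + 1) ^ (2 - p) * ((b + t) ^ (p - 2) * (t ^ 2 / 2)) := by gcongr
          _ ≤ _ := by gcongr
      linarith

/-- The factor `4` works for every `p > 1`, since `4 ^ (p / 2) ≥ 2`. -/
lemma quarter_rpow_le {p a b : ℝ} (hp : 1 < p) (hb : 0 ≤ b) (hab : 4 * b ≤ a) :
    a ^ p / 4 ≤ (a ^ (p / 2) - b ^ (p / 2)) ^ 2 := by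
  have ha : 0 ≤ a := by linarith
  have h4 : (2 : ℝ) ≤ 4 ^ (p / 2) := by
    calc (2 : ℝ) = 4 ^ (1 / 2 : ℝ) := by
          rw [← Real.sqrt_eq_rpow, show (4 : ℝ) = 2 ^ 2 by norm_num]
          exact (Real.sqrt_sq (by norm_num)).symm
      _ ≤ 4 ^ (p / 2) := Real.rpow_le_rpow_of_exponent_le (by norm_num) (by linarith)
  have hb' : 0 ≤ b ^ (p / 2) := Real.rpow_nonneg hb _
  have h1 : 2 * b ^ (p / 2) ≤ a ^ (p / 2) := by
    calc 2 * b ^ (p / 2) ≤ 4 ^ (p / 2) * b ^ (p / 2) := by gcongr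
      _ = (4 * b) ^ (p / 2) := (Real.mul_rpow (by norm_num) hb).symm
      _ ≤ a ^ (p / 2) := Real.rpow_le_rpow (by positivity) hab (by linarith)
  have h2 : a ^ p = (a ^ (p / 2)) ^ 2 := by
    rw [← Real.rpow_natCast, ← Real.rpow_mul ha]
    congr 1
    push_cast
    ring
  rw [h2]
  nlinarith

theorem stmt_6 (p : ℝ) (hp : 1 < p) (δ : ℝ) (hδ : 0 < δ) :
    ∃ Cδ : ℝ, 1 ≤ Cδ ∧
      ∀ (n : ℕ), 1 ≤ n → ∀ A B : Matrix (Fin n) (Fin n) ℝ, ∀ t : ℝ, 0 ≤ t →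
        phiShift p (frobNorm A) t ≤
          Cδ * phiShift p (frobNorm B) t + δ * frobNorm (Vzero p A - Vzero p B) ^ 2 := by
  obtain ⟨C, hC, habs⟩ := phiShift_le_add_rpow hp (show 0 < δ / 4 by positivity)
  have hK : (1 : ℝ) ≤ 4 ^ |p - 2| := Real.one_le_rpow (by norm_num) (abs_nonneg _)
  refine ⟨4 ^ |p - 2| + C, by linarith, fun n _ A B t ht => ?_⟩
  have hV := mul_le_mul_of_nonneg_left (sq_sub_le_frobNorm_sq hp A B) hδ.le
  have ha : 0 ≤ frobNorm A := Real.sqrt_nonneg _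
  have hb : 0 ≤ frobNorm B := Real.sqrt_nonneg _
  generalize frobNorm (Vzero p A - Vzero p B) = v at *
  generalize frobNorm A = a at *
  generalize frobNorm B = b at *
  have hφ : 0 ≤ phiShift p b t := phiShift_nonneg hb ht
  have hCφ := mul_nonneg hC hφ
  have hKφ := mul_nonneg (zero_le_one.trans hK) hφ
  rw [add_mul]
  by_cases hab : a ≤ 4 * b
  · by_cases hba : b ≤ 4 * a
    · have := phiShift_le_of_comparable hp (by norm_num) ha hb ht hab hba
      have : 0 ≤ δ * v ^ 2 := by positivity
      linarith
    · have h1 := habs a b b t ha hb (by linarith) le_rfl ht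
      have h2 := mul_le_mul_of_nonneg_left (quarter_rpow_le hp ha (not_le.1 hba).le) hδ.le
      rw [sub_sq_comm] at h2
      linarith
  · have h1 := habs a b a t ha hb le_rfl (by linarith) ht
    have h2 := mul_le_mul_of_nonneg_left (quarter_rpow_le hp hb (not_le.1 hab).le) hδ.le
    linarith
end
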